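/- arXiv:1806.04077 — 5 statements merged into one kernel-verified Lean document; each statement's English description precedes it below -/
import Mathlib

section
/- Let κ be an ordinal and let T be a nonempty tree, i.e., a partial order which is well-founded and in which the set of strict predecessors of every element is a chain. Suppose T has no maximal elements and is κ-closed, meaning that for every ordinal α < κ, every strictly increasing function from the ordinals below α into T has a strict upper bound in T. Then T has a chain of order type κ; that is, there exists a strictly increasing function from the set of ordinals below κ into T. -/
/-!
The chain is built by transfinite recursion: at each stage `α`, choose a strict upper bound of
all values chosen at stages `β < α`. By induction, the values below a stage `α < κ` form a
strictly increasing `α`-sequence, so `κ`-closedness supplies such a bound.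
-/


/-- A nonempty κ-closed tree without maximal elements has a chain of
order type κ. A tree is a well-founded partial order in which the set of strict
predecessors of every element is a chain. -/
theorem tree_kappa_closed_has_chain_of_type_kappa
    {T : Type*} [PartialOrder T] [Nonempty T]
    (hwf : WellFounded ((· < ·) : T → T → Prop))
    (hchain : ∀ t : T, IsChain (· ≤ ·) {s : T | s < t})
    (hnomax : ∀ t : T, ∃ s : T, t < s)
    (κ : Ordinal)
    (hclosed : ∀ α < κ, ∀ f : Set.Iio α → T, StrictMono f → ∃ t : T, ∀ β, f β < t) :
    ∃ f : Set.Iio κ → T, StrictMono f := by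
  classical
  -- Where the earlier values have no common strict upper bound, `F` takes a junk value;
  -- the induction `key` shows that this does not happen below `κ`.
  let F : Ordinal → T := WellFounded.fix (r := ((· < ·) : Ordinal → Ordinal → Prop))
    wellFounded_lt
    (fun α g => if h : ∃ t : T, ∀ β (hβ : β < α), g β hβ < t then h.choose
      else Classical.arbitrary T)
  have hF : ∀ α, (∃ t : T, ∀ β < α, F β < t) → ∀ β < α, F β < F α := by
    intro α h
    have e : F α = h.choose := by
      have e' := WellFounded.fix_eq (r := ((· < ·) : Ordinal → Ordinal → Prop))
        wellFounded_lt
        (fun α g => if h : ∃ t : T, ∀ β (hβ : β < α), g β hβ < t then h.choose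
          else Classical.arbitrary T) α
      exact e'.trans (dif_pos h)
    rw [e]
    exact h.choose_spec
  have key : ∀ α, α < κ → ∀ β < α, F β < F α := by
    intro α
    induction α using WellFoundedLT.induction with
    | ind α ih =>
      intro hα
      obtain ⟨t, ht⟩ := hclosed α hα (fun β => F β)
        (fun β γ hβγ => ih γ γ.2 (lt_trans γ.2 hα) β hβγ)
      exact hF α ⟨t, fun β hβ => ht ⟨β, hβ⟩⟩
  exact ⟨fun β => F β, fun β γ hβγ => key γ γ.2 β hβγ⟩
end

section
/- Let X be a type and F : X → Type a family of nonempty types. Let Col(ω, <X) be the partial order whose elements are the partial functions p defined on a finite subset of ℕ × X, with p(n, x) ∈ F x whenever (n, x) is in the domain of p, ordered by reverse extension (q ≤ p iff q extends p as a partial function). Then Col(ω, <X) is weakly homogeneous: for every pair of conditions p, q there is an order automorphism π of Col(ω, <X) such that π(p) and q have a common extension. -/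
/-!
A permutation `σ` of `ℕ` induces an automorphism of `Col(ω, <X)` by relabelling the first
coordinate, `(n, x) ↦ (σ n, x)`; the value in `F x` need not change since `x` is fixed.
If every natural number occurring in `p` or `q` is below `N`, let `σ` exchange the blocks
`[0, N)` and `[N, 2N)`. Then the relabelled `p` lives on `[N, 2N)` and `q` on `[0, N)`, so
their domains are disjoint and the union of their graphs is a common extension.
-/

/-- A condition of `Col(ω, <X)`: a finite partial function on `ℕ × X` assigning to each
pair `(n, x)` in its domain an element of `F x`, coded as a finite functional graph. -/
def ColCond (X : Type*) (F : X → Type*) : Type _ :=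
  {p : Set ((nx : ℕ × X) × F nx.2) //
    p.Finite ∧ ∀ a ∈ p, ∀ b ∈ p, a.1 = b.1 → a = b}

/-- `Col(ω, <X)` is ordered by reverse extension: `q ≤ p` iff `q` extends `p` as a
partial function, i.e. the graph of `p` is contained in the graph of `q`. -/
instance (X : Type*) (F : X → Type*) : PartialOrder (ColCond X F) where
  le p q := q.1 ⊆ p.1
  le_refl p := subset_rfl
  le_trans p q r hpq hqr := Set.Subset.trans hqr hpq
  le_antisymm p q hpq hqp := Subtype.ext (subset_antisymm hqp hpq)

/-- The involution of `ℕ` exchanging the blocks `[0, N)` and `[N, 2N)` by translation. -/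
def blockSwap (N n : ℕ) : ℕ :=
  if n < N then n + N else if n < 2 * N then n - N else n

theorem blockSwap_blockSwap (N n : ℕ) : blockSwap N (blockSwap N n) = n := by
  unfold blockSwap
  split_ifs <;> omega

theorem le_blockSwap {N n : ℕ} (h : n < N) : N ≤ blockSwap N n := by
  simp [blockSwap, h]

/-- Relabelling of a point `((n, x), y)` of a graph by a function acting on `n`. -/
def relabel {X : Type*} {F : X → Type*} (σ : ℕ → ℕ) (a : (nx : ℕ × X) × F nx.2) :
    (nx : ℕ × X) × F nx.2 :=
  ⟨(σ a.1.1, a.1.2), a.2⟩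

theorem relabel_involutive {X : Type*} {F : X → Type*} {σ : ℕ → ℕ}
    (hσ : Function.Involutive σ) : Function.Involutive (relabel (F := F) σ) := by
  rintro ⟨⟨n, x⟩, y⟩
  simp only [relabel]
  rw [hσ n]

/-- The image of a condition under relabelling of the `ℕ`-coordinate by an involution. -/
def ColCond.relabel {X : Type*} {F : X → Type*} {σ : ℕ → ℕ}
    (hσ : Function.Involutive σ) (p : ColCond X F) : ColCond X F :=
  ⟨_root_.relabel σ '' p.1, p.2.1.image _, by
    rintro _ ⟨a, ha, rfl⟩ _ ⟨b, hb, rfl⟩ hab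
    have h : σ a.1.1 = σ b.1.1 ∧ a.1.2 = b.1.2 := Prod.ext_iff.mp hab
    rw [p.2.2 a ha b hb (Prod.ext (hσ.injective h.1) h.2)]⟩

theorem ColCond.relabel_relabel {X : Type*} {F : X → Type*} {σ : ℕ → ℕ}
    (hσ : Function.Involutive σ) (p : ColCond X F) :
    ColCond.relabel hσ (ColCond.relabel hσ p) = p := by
  apply Subtype.ext
  change _root_.relabel σ '' (_root_.relabel σ '' p.1) = p.1
  rw [Set.image_image]
  simp only [relabel_involutive hσ _, Set.image_id']

/-- The order automorphism of `Col(ω, <X)` induced by an involution of `ℕ`. -/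
def ColCond.relabelIso {X : Type*} {F : X → Type*} {σ : ℕ → ℕ}
    (hσ : Function.Involutive σ) : ColCond X F ≃o ColCond X F where
  toFun := ColCond.relabel hσ
  invFun := ColCond.relabel hσ
  left_inv := ColCond.relabel_relabel hσ
  right_inv := ColCond.relabel_relabel hσ
  map_rel_iff' := Set.image_subset_image_iff (relabel_involutive hσ).injective

/-- Conditions with disjoint domains have a common extension. -/
theorem ColCond.exists_le_of_disjoint {X : Type*} {F : X → Type*} (p q : ColCond X F)
    (h : ∀ a ∈ p.1, ∀ b ∈ q.1, a.1 ≠ b.1) : ∃ r : ColCond X F, r ≤ p ∧ r ≤ q := by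
  refine ⟨⟨p.1 ∪ q.1, p.2.1.union q.2.1, ?_⟩, Set.subset_union_left, Set.subset_union_right⟩
  rintro a (ha | ha) b (hb | hb) hab
  · exact p.2.2 a ha b hb hab
  · exact (h a ha b hb hab).elim
  · exact (h b hb a ha hab.symm).elim
  · exact q.2.2 a ha b hb hab

/-- If each `F x` is nonempty, then `Col(ω, <X)` is weakly homogeneous:
for every pair of conditions `p, q` there is an order automorphism `π` such that
`π p` and `q` have a common extension. -/
theorem colCond_weaklyHomogeneous (X : Type*) (F : X → Type*)
    (hne : ∀ x : X, Nonempty (F x)) (p q : ColCond X F) :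
    ∃ π : ColCond X F ≃o ColCond X F, ∃ r : ColCond X F, r ≤ π p ∧ r ≤ q := by
  obtain ⟨M, hM⟩ := ((p.2.1.union q.2.1).image fun a => a.1.1).bddAbove
  have hp : ∀ a ∈ p.1, a.1.1 < M + 1 := fun a ha =>
    Nat.lt_succ_of_le (hM ⟨a, Or.inl ha, rfl⟩)
  have hq : ∀ a ∈ q.1, a.1.1 < M + 1 := fun a ha =>
    Nat.lt_succ_of_le (hM ⟨a, Or.inr ha, rfl⟩)
  have hσ : Function.Involutive (blockSwap (M + 1)) := blockSwap_blockSwap _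
  refine ⟨ColCond.relabelIso hσ, ColCond.exists_le_of_disjoint _ _ ?_⟩
  rintro _ ⟨a, ha, rfl⟩ b hb hab
  have h : blockSwap (M + 1) a.1.1 = b.1.1 := congrArg Prod.fst hab
  exact absurd (hq b hb) (not_lt.mpr (h ▸ le_blockSwap (hp a ha)))
end

section
/- Let X be a type and let F : X → Type be a family of nonempty types. The partial order Col(ω, <X) of finite-domain partial functions p on ℕ × X with p(n, x) ∈ F x, ordered by reverse extension, is order-isomorphic to the product Col(ω, <X) × Col(ω, <X) with the componentwise order. -/
namespace ColCond

variable {X : Type*} {F : X → Type*}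

/-- The point `(n, x) ↦ v` moved to the coordinate `(2 * n, x)` or `(2 * n + 1, x)`,
according to whether `i` is `0` or `1`. -/
def shift (i : Fin 2) (a : (nx : ℕ × X) × F nx.2) : (nx : ℕ × X) × F nx.2 :=
  ⟨(2 * a.1.1 + i, a.1.2), a.2⟩

theorem shift_fst_eq {i j : Fin 2} {a b : (nx : ℕ × X) × F nx.2}
    (h : (shift i a).1 = (shift j b).1) : i = j ∧ a.1 = b.1 := by
  have h1 : 2 * a.1.1 + (i : ℕ) = 2 * b.1.1 + j := congrArg Prod.fst h
  have h2 : a.1.2 = b.1.2 := (Prod.ext_iff.1 h).2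
  exact ⟨Fin.ext (by omega), Prod.ext (by omega) h2⟩

theorem shift_injective (i : Fin 2) : Function.Injective (shift (F := F) i) := by
  rintro ⟨⟨n, x⟩, v⟩ ⟨⟨m, y⟩, w⟩ h
  obtain ⟨-, h1⟩ := shift_fst_eq (congrArg Sigma.fst h)
  cases h1
  simpa [shift] using h

theorem exists_shift_eq (a : (nx : ℕ × X) × F nx.2) : ∃ i b, shift i b = a := by
  obtain ⟨⟨n, x⟩, v⟩ := a
  obtain ⟨k, rfl | rfl⟩ := Nat.even_or_odd' n
  · exact ⟨0, ⟨(k, x), v⟩, rfl⟩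
  · exact ⟨1, ⟨(k, x), v⟩, rfl⟩

/-- The even (`i = 0`) or odd (`i = 1`) part of a condition, reindexed by all of `ℕ`. -/
def part (i : Fin 2) (p : ColCond X F) : ColCond X F :=
  ⟨shift i ⁻¹' p.1, p.2.1.preimage (shift_injective i).injOn, fun a ha b hb hab =>
    shift_injective i (p.2.2 _ ha _ hb (by simp only [shift, hab]))⟩

/-- The condition whose even part is `q 0` and whose odd part is `q 1`. -/
def glue (q : Fin 2 → ColCond X F) : ColCond X F :=
  ⟨⋃ i, shift i '' (q i).1, Set.finite_iUnion fun i => (q i).2.1.image _, by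
    intro a ha b hb hab
    obtain ⟨i, a, ha', rfl⟩ := Set.mem_iUnion.1 ha
    obtain ⟨j, b, hb', rfl⟩ := Set.mem_iUnion.1 hb
    obtain ⟨rfl, h⟩ := shift_fst_eq hab
    rw [(q i).2.2 a ha' b hb' h]⟩

theorem part_glue (q : Fin 2 → ColCond X F) (i : Fin 2) : part i (glue q) = q i := by
  refine Subtype.ext (Set.ext fun a => ⟨fun h => ?_, fun h => ?_⟩)
  · obtain ⟨j, b, hb, h⟩ := Set.mem_iUnion.1 h
    obtain ⟨rfl, -⟩ := shift_fst_eq (congrArg Sigma.fst h)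
    rwa [← shift_injective _ h]
  · exact Set.mem_iUnion.2 ⟨i, a, h, rfl⟩

theorem forall_part_le_iff (p q : ColCond X F) : (∀ i, part i p ≤ part i q) ↔ p ≤ q := by
  refine ⟨fun h a ha => ?_, fun h i a ha => h ha⟩
  obtain ⟨i, b, rfl⟩ := exists_shift_eq a
  exact h i ha

end ColCond

/-- If each `F x` is nonempty, then `Col(ω, <X)` is order-isomorphic to
the product `Col(ω, <X) × Col(ω, <X)` with the componentwise order. -/
theorem colCond_orderIso_prod_self (X : Type*) (F : X → Type*)
    (hne : ∀ x : X, Nonempty (F x)) :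
    Nonempty (ColCond X F ≃o ColCond X F × ColCond X F) := by
  refine ⟨RelIso.ofSurjective (OrderEmbedding.ofMapLEIff
    (fun p : ColCond X F => (p.part 0, p.part 1)) fun p q => ?_) fun qr => ?_⟩
  · rw [← ColCond.forall_part_le_iff, Fin.forall_fin_two, Prod.mk_le_mk]
  · exact ⟨ColCond.glue ![qr.1, qr.2],
      Prod.ext (ColCond.part_glue _ 0) (ColCond.part_glue _ 1)⟩
end

section
/- Let X be any type and let Add(ω, X) be the partial order whose conditions are the partial functions from X × ℕ to Bool with finite domain, ordered by reverse inclusion (q ≤ p iff q extends p). Then every antichain in Add(ω, X) is countable; that is, every set of pairwise incompatible conditions is countable. -/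
/-!
The antichain is split into countably many pieces according to the size `n` of the domain, and each
piece is shown to be finite by induction on `n` (`finite_of_pairwise_conflict`), so no Δ-system
lemma is needed. Fix a member `p` of the piece. Any other member disagrees with `p` at one of the
finitely many points of the domain of `p`, so it contains one of the finitely many entries `e`
obtained by flipping the value in an entry of `p`. The members containing a given `e` agree at `e`,
hence remain pairwise incompatible after `e` is removed, and the induction hypothesis for `n - 1`
applies to them.
-/

/-- A condition of `Add(ω, X)`: a partial function from `X × ℕ` to `Bool` with finite
domain, coded as a finite functional graph. -/
def AddCond (X : Type*) : Type _ :=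
  {p : Set ((X × ℕ) × Bool) //
    p.Finite ∧ ∀ a ∈ p, ∀ b ∈ p, a.1 = b.1 → a = b}

/-- `Add(ω, X)` is ordered by reverse inclusion: `q ≤ p` iff `q` extends `p` as a
partial function, i.e. the graph of `p` is contained in the graph of `q`. -/
instance (X : Type*) : PartialOrder (AddCond X) where
  le p q := q.1 ⊆ p.1
  le_refl p := subset_rfl
  le_trans p q r hpq hqr := Set.Subset.trans hqr hpq
  le_antisymm p q hpq hqp := Subtype.ext (subset_antisymm hqp hpq)

/-- Two graphs of partial functions to `Bool` conflict if they take opposite values at some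
point. -/
def GraphConflict {α : Type*} (p q : Finset (α × Bool)) : Prop :=
  ∃ x b, (x, b) ∈ p ∧ (x, !b) ∈ q

/-- Pairwise incompatible finite partial functions with domains of one fixed size are finite in
number. -/
theorem finite_of_pairwise_conflict {α : Type*} (n : ℕ) (A : Set (Finset (α × Bool)))
    (hcard : ∀ p ∈ A, p.card = n) (hfun : ∀ p ∈ A, ¬GraphConflict p p)
    (hA : ∀ p ∈ A, ∀ q ∈ A, p ≠ q → GraphConflict p q) : A.Finite := by
  classical
  induction n generalizing A with
  | zero =>
    exact (Set.finite_singleton ∅).subset fun p hp => Finset.card_eq_zero.1 (hcard p hp)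
  | succ n ih =>
    obtain rfl | ⟨p, hp⟩ := A.eq_empty_or_nonempty
    · exact Set.finite_empty
    have key : ∀ e : α × Bool, {q ∈ A | e ∈ q}.Finite := by
      intro e
      refine Set.Finite.of_finite_image (f := fun q => q.erase e) (ih _ ?_ ?_ ?_) ?_
      · rintro _ ⟨q, ⟨hq, he⟩, rfl⟩
        simp [Finset.card_erase_of_mem he, hcard q hq]
      · rintro _ ⟨q, ⟨hq, he⟩, rfl⟩ ⟨x, b, h1, h2⟩
        exact hfun q hq ⟨x, b, Finset.mem_of_mem_erase h1, Finset.mem_of_mem_erase h2⟩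
      · rintro _ ⟨q, ⟨hq, he⟩, rfl⟩ _ ⟨r, ⟨hr, he'⟩, rfl⟩ hne
        obtain ⟨x, b, h1, h2⟩ := hA q hq r hr (fun h => hne (by rw [h]))
        -- The conflict is not at `e`: otherwise `q` or `r` would conflict with itself.
        refine ⟨x, b, Finset.mem_erase.2 ⟨?_, h1⟩, Finset.mem_erase.2 ⟨?_, h2⟩⟩
        · rintro rfl
          exact hfun r hr ⟨x, b, he', h2⟩
        · rintro rfl
          exact hfun q hq ⟨x, b, h1, he⟩
      · rintro q ⟨-, he⟩ r ⟨-, he'⟩ h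
        rw [← Finset.insert_erase he, ← Finset.insert_erase he']
        exact congrArg (insert e) h
    refine ((Set.finite_singleton p).union
      (p.finite_toSet.biUnion fun a _ => key (a.1, !a.2))).subset ?_
    intro q hq
    by_cases h : p = q
    · exact Or.inl h.symm
    · obtain ⟨x, b, h1, h2⟩ := hA p hp q hq h
      exact Or.inr (Set.mem_biUnion (Finset.mem_coe.2 h1) ⟨hq, h2⟩)

/-- The graph of a condition as a `Finset`. -/
noncomputable def AddCond.graph {X : Type*} (p : AddCond X) : Finset ((X × ℕ) × Bool) :=
  p.2.1.toFinset

theorem AddCond.mem_graph {X : Type*} (p : AddCond X) (a : (X × ℕ) × Bool) :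
    a ∈ p.graph ↔ a ∈ p.1 :=
  Set.Finite.mem_toFinset _

theorem AddCond.graph_injective {X : Type*} :
    Function.Injective (AddCond.graph : AddCond X → _) := by
  intro p q h
  refine Subtype.ext (Set.ext fun a => ?_)
  rw [← AddCond.mem_graph, ← AddCond.mem_graph, h]

theorem AddCond.not_conflict_self {X : Type*} (p : AddCond X) :
    ¬GraphConflict p.graph p.graph := by
  rintro ⟨x, b, h1, h2⟩
  rw [AddCond.mem_graph] at h1 h2
  have := p.2.2 _ h1 _ h2 rfl
  simp at this

/-- Without a conflict, the union of the two graphs is a common extension. -/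
theorem AddCond.conflict_of_incompatible {X : Type*} (p q : AddCond X)
    (h : ¬∃ r : AddCond X, r ≤ p ∧ r ≤ q) : GraphConflict p.graph q.graph := by
  by_contra hc
  have hpq : ∀ a ∈ p.1, ∀ b ∈ q.1, a.1 = b.1 → a = b := by
    rintro ⟨x, b⟩ ha ⟨y, c⟩ hb (rfl : x = y)
    by_contra hne
    have hcb : c = !b := by
      cases b <;> cases c <;> simp_all
    subst hcb
    exact hc ⟨x, b, (p.mem_graph _).2 ha, (q.mem_graph _).2 hb⟩
  refine h ⟨⟨p.1 ∪ q.1, p.2.1.union q.2.1, ?_⟩, Set.subset_union_left, Set.subset_union_right⟩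
  rintro a (ha | ha) b (hb | hb) hab
  · exact p.2.2 a ha b hb hab
  · exact hpq a ha b hb hab
  · exact (hpq b hb a ha hab.symm).symm
  · exact q.2.2 a ha b hb hab

/-- Every antichain in `Add(ω, X)` (a set of pairwise incompatible
conditions) is countable. -/
theorem addCond_antichain_countable (X : Type*) (A : Set (AddCond X))
    (hA : ∀ p ∈ A, ∀ q ∈ A, p ≠ q → ¬∃ r : AddCond X, r ≤ p ∧ r ≤ q) :
    A.Countable := by
  have hU : A = ⋃ n : ℕ, {p ∈ A | p.graph.card = n} := by
    ext p
    simp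
  rw [hU]
  refine Set.countable_iUnion fun n => Set.Finite.countable ?_
  refine Set.Finite.of_finite_image (f := AddCond.graph)
    (finite_of_pairwise_conflict n _ ?_ ?_ ?_) AddCond.graph_injective.injOn
  · rintro _ ⟨p, ⟨-, hp⟩, rfl⟩
    exact hp
  · rintro _ ⟨p, -, rfl⟩
    exact p.not_conflict_self
  · rintro _ ⟨p, ⟨hp, -⟩, rfl⟩ _ ⟨q, ⟨hq, -⟩, rfl⟩ hne
    exact p.conflict_of_incompatible q (hA p hp q hq fun h => hne (by rw [h]))
end

section
/- There exists a family (S_i), indexed by the ordinals i below ω₁, of pairwise disjoint subsets of the set of ordinals below ω₁, each of which is stationary in ω₁; that is, ω₁ can be split into ℵ₁ pairwise disjoint stationary subsets. -/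
/-!
The proof uses an Ulam matrix. For every `a < ω₁` the set of ordinals below `a` is countable, so
there is a map `e a` into `ℕ` that is injective on it. Put `A n b = {a | b < a ∧ e a b = n}`. For
a fixed `n` the sets `A n b` are pairwise disjoint in `b`, by injectivity of `e a`. For a fixed `b`
the union of the `A n b` over `n` is the final segment above `b`, which is stationary; since a
countable union of nonstationary sets is nonstationary, some `A (n b) b` is stationary. Finally
`n` takes some value `m` on uncountably many `b`, and the sets `A m b` for those `b` form
the required family.

The argument is carried out in the order `Set.Iio ω₁` with Mathlib's `IsStationary`.
-/

/-- The first uncountable ordinal `ω₁`. -/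
noncomputable def omegaOne : Ordinal := (Cardinal.aleph 1).ord

/-- `C` is a club (closed and unbounded) subset of `ω₁`: it consists of ordinals below
`ω₁`, is unbounded in `ω₁`, and contains every `α < ω₁` in which `C ∩ α` is
unbounded (for `α > 0`). -/
def IsClubInOmegaOne (C : Set Ordinal) : Prop :=
  C ⊆ Set.Iio omegaOne ∧
  (∀ α < omegaOne, ∃ β ∈ C, α < β) ∧
  (∀ α < omegaOne, 0 < α → (∀ β < α, ∃ γ ∈ C, β < γ ∧ γ < α) → α ∈ C)

/-- `S` is stationary in `ω₁`: it meets every club subset of `ω₁`. -/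
def IsStationaryInOmegaOne (S : Set Ordinal) : Prop :=
  ∀ C : Set Ordinal, IsClubInOmegaOne C → (S ∩ C).Nonempty

open Cardinal

/-- A set that is club in the sense of `IsClubInOmegaOne` is an `IsClub` in the order `Set.Iio ω₁`,
so stationarity transfers in the opposite direction. -/
theorem IsStationary.isStationaryInOmegaOne {s : Set (Set.Iio omegaOne)} (hs : IsStationary s) :
    IsStationaryInOmegaOne (Subtype.val '' s) := by
  rintro C ⟨hsub, hunb, hcl⟩
  have hC : IsClub (Subtype.val ⁻¹' C : Set (Set.Iio omegaOne)) := by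
    refine ⟨fun d hd hne _ a ha ↦ ?_, fun a ↦ ?_⟩
    · by_cases had : a ∈ d
      · exact hd had
      have hlt : ∀ c ∈ d, c < a := fun c hc ↦ (ha.1 hc).lt_of_ne (by rintro rfl; exact had hc)
      obtain ⟨c, hc⟩ := hne
      refine hcl a a.2 (pos_of_gt (show (c : Ordinal) < a from hlt c hc)) fun β hβ ↦ ?_
      obtain ⟨γ, hγ, hβγ⟩ := (lt_isLUB_iff ha).1 (show ⟨β, hβ.trans a.2⟩ < a from hβ)
      exact ⟨γ, hd hγ, hβγ, hlt γ hγ⟩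
    · obtain ⟨β, hβ, hab⟩ := hunb a a.2
      exact ⟨⟨β, hsub hβ⟩, hβ, hab.le⟩
  obtain ⟨x, hxs, hxC⟩ := hs hC
  exact ⟨x, ⟨x, hxs, rfl⟩, hxC⟩

theorem mk_Iio_omegaOne : #(Set.Iio omegaOne) = ℵ₁ := by
  simp [omegaOne]

theorem cof_Iio_omegaOne : Order.cof (Set.Iio omegaOne) = ℵ₁ := by
  rw [Ordinal.cof_Iio, ← Ordinal.lift_cof, omegaOne, isRegular_aleph_one.cof_ord]
  simp

theorem countable_Iio_of_lt_omegaOne (a : Set.Iio omegaOne) : (Set.Iio a).Countable := by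
  have h : (Set.Iio (a : Ordinal)).Countable := by
    rw [← le_aleph0_iff_set_countable, mk_Iio_ordinal, lift_le_aleph0, ← lt_aleph_one_iff]
    exact lt_ord.1 a.2
  exact (h.preimage Subtype.val_injective).mono fun b hb ↦ hb

theorem isStationary_Ioi (b : Set.Iio omegaOne) : IsStationary (Set.Ioi b) := by
  have hlim : Order.IsSuccLimit omegaOne := isSuccLimit_ord (aleph0_le_aleph 1)
  refine .of_not_isCofinal_compl fun h ↦ ?_
  obtain ⟨c, hc, hbc⟩ := h ⟨Order.succ b.1, hlim.succ_lt b.2⟩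
  exact hc ((Order.lt_succ b.1).trans_le hbc)

/-- There is a family, indexed by the ordinals below `ω₁`, of pairwise
disjoint stationary subsets of `ω₁`. -/
theorem exists_omegaOne_pairwise_disjoint_stationary :
    ∃ S : Ordinal → Set Ordinal,
      (∀ i < omegaOne, S i ⊆ Set.Iio omegaOne) ∧
      (∀ i < omegaOne, ∀ j < omegaOne, i ≠ j → S i ∩ S j = ∅) ∧
      (∀ i < omegaOne, IsStationaryInOmegaOne (S i)) := by
  classical
  have hcof : Order.cof (Set.Iio omegaOne) ≠ ℵ₀ :=
    cof_Iio_omegaOne ▸ aleph0_lt_aleph_one.ne'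
  choose e he using fun a ↦ Set.countable_iff_exists_injOn.1 (countable_Iio_of_lt_omegaOne a)
  let A (n : ℕ) (b : Set.Iio omegaOne) : Set (Set.Iio omegaOne) := {a | b < a ∧ e a b = n}
  have hA (b) : ∃ n, IsStationary (A n b) := by
    rw [← isStationary_iUnion_iff_of_countable hcof]
    exact (isStationary_Ioi b).mono fun a ha ↦ Set.mem_iUnion.2 ⟨e a b, ha, rfl⟩
  choose n hn using hA
  obtain ⟨m, hm⟩ : ∃ m, ¬ (n ⁻¹' {m}).Countable := by
    by_contra! h
    have huniv : (Set.univ : Set (Set.Iio omegaOne)).Countable :=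
      (Set.countable_iUnion h).mono fun b _ ↦ Set.mem_iUnion.2 ⟨n b, rfl⟩
    rw [← le_aleph0_iff_set_countable, mk_univ, mk_Iio_omegaOne] at huniv
    exact huniv.not_gt aleph0_lt_aleph_one
  -- The index ordinals and the ordinals in the stationary sets may live in different universes.
  obtain ⟨g⟩ : Nonempty (Set.Iio omegaOne ↪ n ⁻¹' {m}) := by
    rw [← lift_mk_le', mk_Iio_omegaOne, lift_aleph, Ordinal.lift_one, ← succ_aleph0,
      Order.succ_le_iff, aleph0_lt_lift]
    rwa [← le_aleph0_iff_set_countable, not_le] at hm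
  refine ⟨fun i ↦ if h : i < omegaOne then Subtype.val '' A m (g ⟨i, h⟩) else ∅, ?_, ?_, ?_⟩
  · rintro i hi
    simp only [hi, dif_pos]
    rintro _ ⟨a, -, rfl⟩
    exact a.2
  · intro i hi j hj hij
    simp only [hi, hj, dif_pos]
    rw [← Set.disjoint_iff_inter_eq_empty, Set.disjoint_image_iff Subtype.val_injective,
      Set.disjoint_left]
    rintro a ⟨hia, hei⟩ ⟨hja, hej⟩
    have hg := g.injective (Subtype.ext (he a hia hja (hei.trans hej.symm)))
    exact hij (congrArg Subtype.val hg)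
  · intro i hi
    simp only [hi, dif_pos]
    have h := hn (g ⟨i, hi⟩)
    rw [show n (g ⟨i, hi⟩) = m from (g ⟨i, hi⟩).2] at h
    exact h.isStationaryInOmegaOne
end
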